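/- The group homomorphism from the free group on three generators to the group of invertible 3×3 matrices over ℚ that sends the three generators to R₁, R₂, R₃ respectively is injective; that is, R₁, R₂, R₃ are free generators of the subgroup of SO(3) that they generate. -/

import Mathlib

open Matrix

/-- The three rational rotation matrices `R₁, R₂, R₃`. -/
def Rgen : Fin 3 → Matrix (Fin 3) (Fin 3) ℚ :=
  ![!![1, 0, 0; 0, -3/5, 4/5; 0, -4/5, -3/5],
    !![-3/5, 0, -4/5; 0, 1, 0; 4/5, 0, -3/5],
    !![-3/5, 4/5, 0; -4/5, -3/5, 0; 0, 0, 1]]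

/-!
The matrices `5 R_i` and `5 R_i⁻¹ = 5 R_iᵀ` are integral, and modulo `5` they have rank one:
there are six vectors `u_a` over `ZMod 5`, one for each letter `a`, such that the matrix of `a`
becomes `u_a u_{a⁻¹}ᵀ`. These vectors are isotropic, as orthogonality of the `R_i` requires, but
no two distinct ones are orthogonal to each other. Modulo `5`, the product along a nonempty reduced
word with first letter `a` and last letter `z` is therefore `u_a u_{z⁻¹}ᵀ` times the product of the
scalars `u_{b⁻¹} ⬝ u_c ≠ 0` over consecutive letters `b`, `c`, and so it is nonzero. If such a word
of length `k` represented an element of the kernel, this product would be `5 ^ k = 0`.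
-/

section FreenessCriterion

variable {α R S A B : Type*} [CommSemiring R] [Semiring S] [Semiring A] [Semiring B]
  [Algebra R S] [Algebra R A] [Algebra R B]

lemma map_list_prod_eq_pow_smul {ι : S →ₐ[R] A} {p : R} {s : α × Bool → S}
    {φ : FreeGroup α →* Aˣ} (hs : ∀ a, ι (s a) = p • (φ (FreeGroup.mk [a]) : A))
    (L : List (α × Bool)) :
    ι (L.map s).prod = p ^ L.length • (φ (FreeGroup.mk L) : A) := by
  induction L with
  | nil => simp [← FreeGroup.one_eq_mk]
  | cons a L ih =>
    have mk_cons : FreeGroup.mk (a :: L) = FreeGroup.mk [a] * FreeGroup.mk L := by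
      rw [FreeGroup.mul_mk, List.singleton_append]
    rw [List.map_cons, List.prod_cons, map_mul, hs, ih, mk_cons, map_mul, Units.val_mul,
      smul_mul_smul_comm, List.length_cons, pow_succ']

lemma injective_of_forall_isReduced_prod_ne_zero {ι : S →ₐ[R] A} (hι : Function.Injective ι)
    (π : S →ₐ[R] B) {p : R} (hp : algebraMap R B p = 0) {s : α × Bool → S}
    {φ : FreeGroup α →* Aˣ} (hs : ∀ a, ι (s a) = p • (φ (FreeGroup.mk [a]) : A))
    (hprod : ∀ L, L ≠ [] → FreeGroup.IsReduced L → (L.map (π ∘ s)).prod ≠ 0) :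
    Function.Injective φ := by
  classical
  rw [injective_iff_map_eq_one]
  intro g hg
  by_contra hg_ne
  have word_ne_nil : g.toWord ≠ [] := mt FreeGroup.toWord_eq_nil_iff.mp hg_ne
  have prod_eq : (g.toWord.map s).prod = algebraMap R S (p ^ g.toWord.length) := by
    apply hι
    rw [map_list_prod_eq_pow_smul hs, FreeGroup.mk_toWord, hg, Units.val_one, AlgHom.commutes,
      Algebra.algebraMap_eq_smul_one]
  apply hprod g.toWord word_ne_nil FreeGroup.isReduced_toWord
  rw [← List.map_map, ← map_list_prod, prod_eq, AlgHom.commutes, map_pow, hp,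
    zero_pow (mt List.length_eq_zero_iff.mp word_ne_nil)]

end FreenessCriterion

section RankOne

variable {α n R : Type*} [Fintype n] [DecidableEq n] [CommSemiring R] [IsDomain R]
  {u v : α → n → R}

lemma exists_prod_map_vecMulVec_eq_smul {a : α} {L : List α}
    (hL : (a :: L).IsChain fun b c ↦ v b ⬝ᵥ u c ≠ 0) :
    ∃ r : R, r ≠ 0 ∧ ∃ b ∈ a :: L,
      ((a :: L).map fun c ↦ vecMulVec (u c) (v c)).prod = r • vecMulVec (u a) (v b) := by
  induction L generalizing a with
  | nil => exact ⟨1, one_ne_zero, a, by simp⟩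
  | cons a' L ih =>
    obtain ⟨hdot, hL'⟩ := List.isChain_cons_cons.mp hL
    obtain ⟨r, hr, b, hb, hprod⟩ := ih hL'
    refine ⟨r * v a ⬝ᵥ u a', mul_ne_zero hr hdot, b, List.mem_cons_of_mem a hb, ?_⟩
    rw [List.map_cons, List.prod_cons, hprod, mul_smul_comm, vecMulVec_mul_vecMulVec,
      vecMulVec_smul, smul_smul]

lemma prod_map_vecMulVec_ne_zero {L : List α} (hL_ne : L ≠ []) (hu : ∀ a ∈ L, u a ≠ 0)
    (hv : ∀ a ∈ L, v a ≠ 0) (hL : L.IsChain fun a b ↦ v a ⬝ᵥ u b ≠ 0) :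
    (L.map fun a ↦ vecMulVec (u a) (v a)).prod ≠ 0 := by
  obtain ⟨a, L, rfl⟩ := List.exists_cons_of_ne_nil hL_ne
  obtain ⟨r, hr, b, hb, hprod⟩ := exists_prod_map_vecMulVec_eq_smul hL
  rw [hprod]
  exact smul_ne_zero hr (vecMulVec_ne_zero (hu a List.mem_cons_self) (hv b hb))

end RankOne

lemma Rgen_mem_orthogonalGroup (i : Fin 3) : Rgen i ∈ orthogonalGroup (Fin 3) ℚ := by
  rw [mem_orthogonalGroup_iff]
  fin_cases i <;> ext j k <;> fin_cases j <;> fin_cases k <;>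
    simp [Rgen, Matrix.mul_apply, Fin.sum_univ_three] <;> norm_num

/-- The integral matrices `5 R_i`. -/
def scaledRgen : Fin 3 → Matrix (Fin 3) (Fin 3) ℤ :=
  ![!![5, 0, 0; 0, -3, 4; 0, -4, -3],
    !![-3, 0, -4; 0, 5, 0; 4, 0, -3],
    !![-3, 4, 0; -4, -3, 0; 0, 0, 5]]

lemma scaledRgen_map_intCast (i : Fin 3) :
    (scaledRgen i).map (Int.cast : ℤ → ℚ) = (5 : ℤ) • Rgen i := by
  fin_cases i <;> ext j k <;> fin_cases j <;> fin_cases k <;> norm_num [scaledRgen, Rgen]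

/-- The integral matrices `5 R_i` and `5 R_i⁻¹`, indexed by the letters `(i, true)` and
`(i, false)` of the free group. The inverse of a rotation is encoded as its transpose. -/
def scaledLetter : Fin 3 × Bool → Matrix (Fin 3) (Fin 3) ℤ
  | (i, true) => scaledRgen i
  | (i, false) => (scaledRgen i)ᵀ

lemma scaledLetter_map_intCast {φ : FreeGroup (Fin 3) →* GL (Fin 3) ℚ}
    (hφ : ∀ i, (φ (FreeGroup.of i) : Matrix (Fin 3) (Fin 3) ℚ) = Rgen i) (a : Fin 3 × Bool) :
    (scaledLetter a).map (Int.cast : ℤ → ℚ) =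
      (5 : ℤ) • (φ (FreeGroup.mk [a]) : Matrix (Fin 3) (Fin 3) ℚ) := by
  match a with
  | (i, true) => exact (scaledRgen_map_intCast i).trans (congrArg _ (hφ i).symm)
  | (i, false) =>
    have map_inv_eq : (φ (FreeGroup.of i)⁻¹ : Matrix (Fin 3) (Fin 3) ℚ) = (Rgen i)ᵀ := by
      rw [map_inv]
      apply Units.inv_eq_of_mul_eq_one_right
      rw [hφ, (mem_orthogonalGroup_iff _ _).mp (Rgen_mem_orthogonalGroup i)]
    change (scaledRgen i)ᵀ.map _ = (5 : ℤ) • (φ (FreeGroup.of i)⁻¹ : Matrix (Fin 3) (Fin 3) ℚ)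
    rw [map_inv_eq, transpose_map, scaledRgen_map_intCast, transpose_smul]

/-- The vectors `u_a` with `scaledLetter a ≡ u_a u_{a⁻¹}ᵀ` modulo `5`. They are determined up to
scaling `u_a` by a unit and `u_{a⁻¹}` by its inverse. -/
def isotropicVec : Fin 3 × Bool → Fin 3 → ZMod 5
  | (i, true) => ![![0, 2, 1], ![1, 0, 2], ![2, 1, 0]] i
  | (i, false) => ![![0, 1, 2], ![2, 0, 1], ![1, 2, 0]] i

lemma isotropicVec_ne_zero (a : Fin 3 × Bool) : isotropicVec a ≠ 0 := by
  revert a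
  decide

lemma isotropicVec_dotProduct_eq_zero_iff {a b : Fin 3 × Bool} :
    isotropicVec a ⬝ᵥ isotropicVec b = 0 ↔ a = b := by
  revert a b
  decide

lemma scaledLetter_map_zmod_five (a : Fin 3 × Bool) :
    (scaledLetter a).map (Int.cast : ℤ → ZMod 5) =
      vecMulVec (isotropicVec a) (isotropicVec (a.1, !a.2)) := by
  revert a
  decide

lemma prod_map_scaledLetter_zmod_five_ne_zero {L : List (Fin 3 × Bool)} (hL_ne : L ≠ [])
    (hL : FreeGroup.IsReduced L) :
    (L.map fun a ↦ (scaledLetter a).map (Int.cast : ℤ → ZMod 5)).prod ≠ 0 := by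
  have : Fact (Nat.Prime 5) := ⟨Nat.prime_five⟩
  simp only [scaledLetter_map_zmod_five]
  refine prod_map_vecMulVec_ne_zero hL_ne (fun a _ ↦ isotropicVec_ne_zero a)
    (fun a _ ↦ isotropicVec_ne_zero _) (List.IsChain.imp ?_ hL)
  rintro ⟨i, s⟩ _ not_cancel hdot
  obtain rfl := isotropicVec_dotProduct_eq_zero_iff.mp hdot
  exact (Bool.eq_not_self s).mp (not_cancel rfl)

/-- `R₁, R₂, R₃` freely generate the subgroup of `SO(3)` that they generate: the
homomorphism from the free group on three generators sending the generators to
`R₁, R₂, R₃` is injective. -/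
theorem stmt5 (φ : FreeGroup (Fin 3) →* GL (Fin 3) ℚ)
    (hφ : ∀ i : Fin 3, ((φ (FreeGroup.of i) : GL (Fin 3) ℚ) : Matrix (Fin 3) (Fin 3) ℚ) = Rgen i) :
    Function.Injective φ := by
  have five_eq_zero : algebraMap ℤ (Matrix (Fin 3) (Fin 3) (ZMod 5)) 5 = 0 := by decide
  exact injective_of_forall_isReduced_prod_ne_zero
    (ι := (Algebra.ofId ℤ ℚ).mapMatrix) (Matrix.map_injective Int.cast_injective)
    (Algebra.ofId ℤ (ZMod 5)).mapMatrix five_eq_zero (scaledLetter_map_intCast hφ)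
    fun _ ↦ prod_map_scaledLetter_zmod_five_ne_zero
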